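/- For every x ∈ U, the second derivative of the mean curvature at t = 0 is ∂²H(t)/∂t² |_{t=0} = ((2 − n)/n) |∇f(x)|² + 2 (f(x) + φ'(0))² − φ''(0) + (4/n)(f(x) + φ'(0)) Δf(x). -/

import Mathlib

open MeasureTheory Real Set
open scoped RealInnerProductSpace

noncomputable section

abbrev En (n : ℕ) : Type := EuclideanSpace ℝ (Fin n)

/-- Partial derivative of `F` in the `i`-th coordinate direction. -/
def pd {m : ℕ} {E : Type} [NormedAddCommGroup E] [NormedSpace ℝ E]
    (i : Fin m) (F : En m → E) (x : En m) : E :=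
  fderiv ℝ F x (EuclideanSpace.single i 1)

/-- The induced (first fundamental form) metric of a map `Y : U → ℝ^{n+1}`. -/
def gmet {n : ℕ} (Y : En n → En (n + 1)) (x : En n) : Matrix (Fin n) (Fin n) ℝ :=
  Matrix.of fun i j => ⟪pd i Y x, pd j Y x⟫

/-- The variation `X(t,x) = (1 + t f(x) + φ(t)) Φ(x)`. -/
def Xvar {n : ℕ} (f : En n → ℝ) (φ : ℝ → ℝ) (Φ : En n → En (n + 1)) (t : ℝ) (x : En n) :
    En (n + 1) :=
  (1 + t * f x + φ t) • Φ x

/-- Second fundamental form `h_{ij} = ⟨∂X/∂x_i, ∂N/∂x_j⟩`. -/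
def sff {n : ℕ} (Y Nf : En n → En (n + 1)) (x : En n) : Matrix (Fin n) (Fin n) ℝ :=
  Matrix.of fun i j => ⟪pd i Y x, pd j Nf x⟫

/-- Mean curvature `H = (1/n) Σ g^{ij} h_{ij}`. -/
def Hmean {n : ℕ} (Y Nf : En n → En (n + 1)) (x : En n) : ℝ :=
  (1 / (n : ℝ)) * ∑ i, ∑ j, (gmet Y x)⁻¹ i j * sff Y Nf x i j

/-- The volume element `√(det g)`. -/
def vElem {n : ℕ} (Y : En n → En (n + 1)) (x : En n) : ℝ :=
  Real.sqrt (gmet Y x).det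

/-- `|∇u|² = Σ g^{ij} ∂_i u ∂_j u` with respect to the metric of `Φ`. -/
def gradSq {n : ℕ} (Φ : En n → En (n + 1)) (u : En n → ℝ) (x : En n) : ℝ :=
  ∑ i, ∑ j, (gmet Φ x)⁻¹ i j * pd i u x * pd j u x

/-- Tangential gradient `∇u = Σ g^{ij} ∂_i u ∂_j Φ ∈ ℝ^{n+1}`. -/
def gradV {n : ℕ} (Φ : En n → En (n + 1)) (u : En n → ℝ) (x : En n) : En (n + 1) :=
  ∑ i, ∑ j, ((gmet Φ x)⁻¹ i j * pd i u x) • pd j Φ x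

/-- Laplace–Beltrami operator `Δu = (1/√g) Σ ∂_i (√g g^{ij} ∂_j u)`. -/
def lapl {n : ℕ} (Φ : En n → En (n + 1)) (u : En n → ℝ) (x : En n) : ℝ :=
  (vElem Φ x)⁻¹ * ∑ i, ∑ j, pd i (fun y => vElem Φ y * (gmet Φ y)⁻¹ i j * pd j u y) x

/-- Christoffel symbols of the metric of `Φ`. -/
def christoffel {n : ℕ} (Φ : En n → En (n + 1)) (k i j : Fin n) (x : En n) : ℝ :=
  (1 / 2) * ∑ l, (gmet Φ x)⁻¹ k l *
    (pd i (fun y => gmet Φ y l j) x + pd j (fun y => gmet Φ y l i) x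
      - pd l (fun y => gmet Φ y i j) x)

/-- Hessian `(∇²u)_{ij} = ∂²u/∂x_i∂x_j − Σ_k Γ^k_{ij} ∂_k u`. -/
def hess {n : ℕ} (Φ : En n → En (n + 1)) (u : En n → ℝ) (x : En n) (i j : Fin n) : ℝ :=
  pd i (fun y => pd j u y) x - ∑ k, christoffel Φ k i j x * pd k u x

open scoped Matrix Topology

/-!
Each `X_t` is a radial graph `ρΦ` over the sphere. Its metric `ρ²g + dρ ⊗ dρ` is a rank-one
perturbation of a multiple of the round metric `g`, its normal is a positive multiple
`a (Φ - ρ⁻¹∇ρ)`, and its second fundamental form is `a` times `ρ⁻¹(metric) + ρ⁻¹dρ ⊗ dρ - ∇²ρ`.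
The Sherman–Morrison formula inverts the metric, so the mean curvature is an explicit function of
`ρ`, `|∇ρ|²`, `∇²ρ(∇ρ, ∇ρ)` and `Δρ`. For `ρ = 1 + φ(t) + tf` the last three are `t²|∇f|²`,
`t³∇²f(∇f, ∇f)` and `tΔf`, and it remains to compute a second-order Taylor expansion at `t = 0`.
-/

section MatrixCalculus

theorem sum_sum_mul_eq_trace_mul {ι R : Type*} [Fintype ι] [NonUnitalNonAssocSemiring R]
    {A : Matrix ι ι R} (hA : A.IsSymm) (B : Matrix ι ι R) :
    ∑ i, ∑ j, A i j * B i j = (A * B).trace := by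
  rw [Finset.sum_comm]
  simp only [Matrix.trace, Matrix.diag_apply, Matrix.mul_apply]
  exact Finset.sum_congr rfl fun j _ => Finset.sum_congr rfl fun i _ => by rw [hA.apply]

variable {ι E : Type*} [Fintype ι] [DecidableEq ι] [NormedAddCommGroup E] [NormedSpace ℝ E]
  {M : E → Matrix ι ι ℝ} {M' : ι → ι → E →L[ℝ] ℝ} {x : E}

theorem det_updateRow_eq_sum_adjugate {R : Type*} [CommRing R] (A : Matrix ι ι R) (i : ι)
    (r : ι → R) : (A.updateRow i r).det = ∑ j, A.adjugate j i * r j := by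
  rw [← Matrix.cramer_transpose_apply, Matrix.cramer_eq_adjugate_mulVec,
    ← Matrix.adjugate_transpose]
  rfl

theorem hasFDerivAt_det (hM : ∀ i j, HasFDerivAt (fun y => M y i j) (M' i j) x) :
    HasFDerivAt (fun y => (M y).det) (∑ i, ∑ j, (M x).adjugate j i • M' i j) x := by
  let D : ContinuousMultilinearMap ℝ (fun _ : ι => ι → ℝ) ℝ :=
    { toMultilinearMap := Matrix.detRowAlternating.toMultilinearMap
      cont := continuous_id.matrix_det }
  have hM' : HasFDerivAt (𝕜 := ℝ) (fun y i j => M y i j) (.pi fun i => .pi (M' i)) x :=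
    hasFDerivAt_pi.2 fun i => hasFDerivAt_pi.2 (hM i)
  refine ((D.hasFDerivAt (M x)).comp x hM').congr_fderiv ?_
  ext v
  have hD : D.linearDeriv (M x) (fun i j => M' i j v) =
      ∑ i, ((M x).updateRow i fun j => M' i j v).det := D.linearDeriv_apply _ _
  simpa [det_updateRow_eq_sum_adjugate] using hD

open scoped Matrix.Norms.Operator in
theorem hasFDerivAt_matrix_inv_apply (hM : ∀ i j, HasFDerivAt (fun y => M y i j) (M' i j) x)
    (hx : IsUnit (M x)) (i j : ι) :
    HasFDerivAt (fun y => (M y)⁻¹ i j)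
      (-∑ k, ∑ l, ((M x)⁻¹ i k * (M x)⁻¹ l j) • M' k l) x := by
  -- Any complete algebra norm on matrices would do: the statement is entrywise.
  have hM' : HasFDerivAt (𝕜 := ℝ) M (.pi fun i => .pi (M' i)) x :=
    hasFDerivAt_pi.2 fun i => hasFDerivAt_pi.2 (hM i)
  obtain ⟨g, hg⟩ := hx
  have hginv : ((g⁻¹ : (Matrix ι ι ℝ)ˣ) : Matrix ι ι ℝ) = (M x)⁻¹ := by
    rw [← hg, Matrix.nonsing_inv_eq_ringInverse, Ring.inverse_unit]
  have hinv := (hg ▸ hasFDerivAt_ringInverse (𝕜 := ℝ) g).comp x hM'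
  rw [hginv] at hinv
  have hentry := hasFDerivAt_pi'.1 (hasFDerivAt_pi'.1 hinv i) j
  simp only [Function.comp_apply, ← Matrix.nonsing_inv_eq_ringInverse] at hentry
  refine hentry.congr_fderiv ?_
  ext v
  change (-((M x)⁻¹ * Matrix.of (fun k l => M' k l v) * (M x)⁻¹)) i j = _
  simp only [Matrix.neg_apply, Matrix.mul_apply, Matrix.of_apply, Finset.sum_mul, neg_apply,
    sum_apply, smul_apply, smul_eq_mul, mul_right_comm]
  rw [Finset.sum_comm]

theorem inv_add_vecMulVec {K : Type*} [Field K] {A : Matrix ι ι K} (hA : IsUnit A) (u v : ι → K)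
    (h : 1 + v ⬝ᵥ A⁻¹ *ᵥ u ≠ 0) :
    (A + Matrix.vecMulVec u v)⁻¹ =
      A⁻¹ - (1 + v ⬝ᵥ A⁻¹ *ᵥ u)⁻¹ • Matrix.vecMulVec (A⁻¹ *ᵥ u) (v ᵥ* A⁻¹) := by
  have hdet := (Matrix.isUnit_iff_isUnit_det A).1 hA
  refine Matrix.inv_eq_right_inv ?_
  simp only [Matrix.add_mul, Matrix.mul_sub, Matrix.mul_nonsing_inv _ hdet, Matrix.mul_smul,
    Matrix.mul_vecMulVec, Matrix.vecMulVec_mul, Matrix.mulVec_mulVec, Matrix.one_mulVec,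
    Matrix.add_mulVec, Matrix.vecMulVec_mulVec, ← Matrix.dotProduct_mulVec]
  ext i j
  simp only [Matrix.smul_apply, Matrix.add_apply, Matrix.sub_apply, Matrix.vecMulVec_apply,
    Pi.add_apply, Pi.smul_apply,
    MulOpposite.smul_eq_mul_unop, MulOpposite.unop_op, smul_eq_mul]
  field_simp
  ring

end MatrixCalculus

section PartialDerivatives

variable {m : ℕ} {E : Type} [NormedAddCommGroup E] {x : En m}

section NormedSpace

variable [NormedSpace ℝ E] {F G : En m → E}

theorem pd_congr (h : F =ᶠ[𝓝 x] G) (i : Fin m) : pd i F x = pd i G x := by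
  rw [pd, h.fderiv_eq, pd]

theorem pd_const (c : E) (i : Fin m) : pd i (fun _ => c) x = 0 := by
  simp [pd]

theorem pd_add (hF : DifferentiableAt ℝ F x) (hG : DifferentiableAt ℝ G x) (i : Fin m) :
    pd i (fun y => F y + G y) x = pd i F x + pd i G x := by
  simp [pd, fderiv_fun_add hF hG]

theorem pd_smul {u : En m → ℝ} (hu : DifferentiableAt ℝ u x) (hF : DifferentiableAt ℝ F x)
    (i : Fin m) : pd i (fun y => u y • F y) x = u x • pd i F x + pd i u x • F x := by
  simp [pd, fderiv_fun_smul hu hF]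

theorem differentiableAt_pd (hF : ContDiffAt ℝ 2 F x) (i : Fin m) :
    DifferentiableAt ℝ (pd i F) x :=
  ((hF.fderiv_right (m := 1) one_add_one_eq_two.le).differentiableAt one_ne_zero).clm_apply
    (differentiableAt_const _)

theorem pd_comm (hF : ContDiffAt ℝ 2 F x) (i j : Fin m) :
    pd i (pd j F) x = pd j (pd i F) x := by
  have hF' : DifferentiableAt ℝ (fderiv ℝ F) x :=
    (hF.fderiv_right (m := 1) one_add_one_eq_two.le).differentiableAt one_ne_zero
  have hpd (k l : Fin m) : pd k (pd l F) x =
      fderiv ℝ (fderiv ℝ F) x (EuclideanSpace.single k 1) (EuclideanSpace.single l 1) := by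
    unfold pd
    simp [fderiv_clm_apply hF' (differentiableAt_const _)]
  rw [hpd, hpd, (hF.isSymmSndFDerivAt (by simp)).eq]

end NormedSpace

theorem pd_mul {u v : En m → ℝ} (hu : DifferentiableAt ℝ u x) (hv : DifferentiableAt ℝ v x)
    (i : Fin m) : pd i (fun y => u y * v y) x = u x * pd i v x + pd i u x * v x :=
  pd_smul hu hv i

theorem pd_const_mul (c : ℝ) (u : En m → ℝ) (i : Fin m) :
    pd i (fun y => c * u y) x = c * pd i u x :=
  DFunLike.congr_fun (congrFun (fderiv_const_smul_field (𝕜 := ℝ) (f := u) c) x) _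

theorem pd_const_add_mul (b c : ℝ) (u : En m → ℝ) (i : Fin m) :
    pd i (fun y => b + c * u y) x = c * pd i u x := by
  rw [← pd_const_mul, pd, fderiv_const_add, pd]

theorem pd_inner [InnerProductSpace ℝ E] {F G : En m → E} (hF : DifferentiableAt ℝ F x)
    (hG : DifferentiableAt ℝ G x) (i : Fin m) :
    pd i (fun y => ⟪F y, G y⟫) x = ⟪F x, pd i G x⟫ + ⟪pd i F x, G x⟫ := by
  simp [pd, fderiv_inner_apply ℝ hF hG]

theorem inner_pd_eq_neg_of_inner_eventuallyEq_const [InnerProductSpace ℝ E] {F G : En m → E} {c : ℝ}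
    (hF : DifferentiableAt ℝ F x) (hG : DifferentiableAt ℝ G x)
    (h : ∀ᶠ y in 𝓝 x, ⟪F y, G y⟫ = c) (i : Fin m) : ⟪F x, pd i G x⟫ = -⟪pd i F x, G x⟫ := by
  rw [eq_neg_iff_add_eq_zero, ← pd_inner hF hG, pd_congr h, pd_const]

end PartialDerivatives

section InducedMetric

variable {n : ℕ} {Φ : En n → En (n + 1)} {u : En n → ℝ} {x : En n}

theorem gmet_isSymm (Φ : En n → En (n + 1)) (x : En n) : (gmet Φ x).IsSymm :=
  Matrix.IsSymm.ext fun i j => real_inner_comm (pd i Φ x) (pd j Φ x)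

theorem differentiableAt_gmet (hΦ : ContDiffAt ℝ 2 Φ x) (k l : Fin n) :
    DifferentiableAt ℝ (fun y => gmet Φ y k l) x :=
  (differentiableAt_pd hΦ k).inner ℝ (differentiableAt_pd hΦ l)

theorem pd_gmet (hΦ : ContDiffAt ℝ 2 Φ x) (i k l : Fin n) :
    pd i (fun y => gmet Φ y k l) x =
      ⟪pd k Φ x, pd i (pd l Φ) x⟫ + ⟪pd i (pd k Φ) x, pd l Φ x⟫ :=
  pd_inner (differentiableAt_pd hΦ k) (differentiableAt_pd hΦ l) i

theorem hasFDerivAt_gmet_inv (hΦ : ContDiffAt ℝ 2 Φ x) (hg : (gmet Φ x).PosDef) (i j : Fin n) :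
    HasFDerivAt (fun y => (gmet Φ y)⁻¹ i j)
      (-∑ k, ∑ l, ((gmet Φ x)⁻¹ i k * (gmet Φ x)⁻¹ l j) • fderiv ℝ (fun y => gmet Φ y k l) x) x :=
  hasFDerivAt_matrix_inv_apply (fun k l => (differentiableAt_gmet hΦ k l).hasFDerivAt) hg.isUnit i j

theorem pd_gmet_inv (hΦ : ContDiffAt ℝ 2 Φ x) (hg : (gmet Φ x).PosDef) (i j m : Fin n) :
    pd m (fun y => (gmet Φ y)⁻¹ i j) x =
      -∑ k, ∑ l, (gmet Φ x)⁻¹ i k * (gmet Φ x)⁻¹ l j * pd m (fun y => gmet Φ y k l) x := by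
  simp [pd, (hasFDerivAt_gmet_inv hΦ hg i j).fderiv]

theorem vElem_pos (hg : (gmet Φ x).PosDef) : 0 < vElem Φ x :=
  Real.sqrt_pos.2 hg.det_pos

theorem hasFDerivAt_vElem (hΦ : ContDiffAt ℝ 2 Φ x) (hg : (gmet Φ x).PosDef) :
    HasFDerivAt (vElem Φ) ((vElem Φ x / 2) •
      ∑ k, ∑ l, (gmet Φ x)⁻¹ k l • fderiv ℝ (fun y => gmet Φ y k l) x) x := by
  have hdet := hg.det_pos.ne'
  have hadj (k l : Fin n) :
      (gmet Φ x).adjugate l k = vElem Φ x ^ 2 * (gmet Φ x)⁻¹ k l := by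
    rw [← (gmet_isSymm Φ x).inv.apply, vElem, Real.sq_sqrt hg.det_pos.le, Matrix.inv_def,
      Matrix.smul_apply, Ring.inverse_eq_inv', smul_eq_mul, mul_inv_cancel_left₀ hdet]
  refine ((hasFDerivAt_det fun k l =>
    (differentiableAt_gmet hΦ k l).hasFDerivAt).sqrt hdet).congr_fderiv ?_
  change (1 / (2 * vElem Φ x)) • _ = _
  have hv := (vElem_pos hg).ne'
  simp only [hadj, mul_smul, ← Finset.smul_sum]
  rw [smul_smul]
  congr 1
  field_simp

theorem pd_vElem (hΦ : ContDiffAt ℝ 2 Φ x) (hg : (gmet Φ x).PosDef) (i : Fin n) :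
    pd i (vElem Φ) x = vElem Φ x / 2 *
      ∑ k, ∑ l, (gmet Φ x)⁻¹ k l * pd i (fun y => gmet Φ y k l) x := by
  simp [pd, (hasFDerivAt_vElem hΦ hg).fderiv]

theorem sum_gmet_inv_mul_christoffel (Φ : En n → En (n + 1)) (x : En n) (j : Fin n) :
    ∑ k, ∑ l, (gmet Φ x)⁻¹ k l * christoffel Φ j k l x =
      ∑ k, ∑ l, ∑ m, (gmet Φ x)⁻¹ k l * (gmet Φ x)⁻¹ j m * pd k (fun y => gmet Φ y m l) x -
        1 / 2 * ∑ k, ∑ l, ∑ m,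
          (gmet Φ x)⁻¹ k l * (gmet Φ x)⁻¹ j m * pd m (fun y => gmet Φ y k l) x := by
  have hswap : ∑ k, ∑ l, ∑ m,
        (gmet Φ x)⁻¹ k l * (gmet Φ x)⁻¹ j m * pd l (fun y => gmet Φ y m k) x =
      ∑ k, ∑ l, ∑ m, (gmet Φ x)⁻¹ k l * (gmet Φ x)⁻¹ j m * pd k (fun y => gmet Φ y m l) x := by
    rw [Finset.sum_comm]
    simp only [(gmet_isSymm Φ x).inv.apply]
  have hterm (k l m : Fin n) : (gmet Φ x)⁻¹ k l * (1 / 2 * ((gmet Φ x)⁻¹ j m *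
      (pd k (fun y => gmet Φ y m l) x + pd l (fun y => gmet Φ y m k) x
        - pd m (fun y => gmet Φ y k l) x))) =
      1 / 2 * ((gmet Φ x)⁻¹ k l * (gmet Φ x)⁻¹ j m * pd k (fun y => gmet Φ y m l) x) +
      1 / 2 * ((gmet Φ x)⁻¹ k l * (gmet Φ x)⁻¹ j m * pd l (fun y => gmet Φ y m k) x) -
      1 / 2 * ((gmet Φ x)⁻¹ k l * (gmet Φ x)⁻¹ j m * pd m (fun y => gmet Φ y k l) x) := by
    ring
  simp only [christoffel, Finset.mul_sum (Finset.univ), hterm]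
  simp only [Finset.sum_add_distrib, Finset.sum_sub_distrib, ← Finset.mul_sum, hswap]
  ring

theorem sum_pd_vElem_mul_gmet_inv (hΦ : ContDiffAt ℝ 2 Φ x) (hg : (gmet Φ x).PosDef)
    (j : Fin n) :
    ∑ i, pd i (fun y => vElem Φ y * (gmet Φ y)⁻¹ i j) x =
      -(vElem Φ x * ∑ k, ∑ l, (gmet Φ x)⁻¹ k l * christoffel Φ j k l x) := by
  have hterm (i : Fin n) : pd i (fun y => vElem Φ y * (gmet Φ y)⁻¹ i j) x =
      vElem Φ x * (1 / 2 * ∑ k, ∑ l,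
        (gmet Φ x)⁻¹ k l * (gmet Φ x)⁻¹ j i * pd i (fun y => gmet Φ y k l) x -
      ∑ k, ∑ l, (gmet Φ x)⁻¹ i k * (gmet Φ x)⁻¹ j l * pd i (fun y => gmet Φ y l k) x) := by
    rw [pd_mul (hasFDerivAt_vElem hΦ hg).differentiableAt
      (hasFDerivAt_gmet_inv hΦ hg i j).differentiableAt, pd_vElem hΦ hg, pd_gmet_inv hΦ hg]
    have hvol : (∑ k, ∑ l, (gmet Φ x)⁻¹ k l * pd i (fun y => gmet Φ y k l) x) * (gmet Φ x)⁻¹ i j =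
        ∑ k, ∑ l, (gmet Φ x)⁻¹ k l * (gmet Φ x)⁻¹ j i * pd i (fun y => gmet Φ y k l) x := by
      simp only [Finset.sum_mul, mul_right_comm, (gmet_isSymm Φ x).inv.apply j i]
    have hinv : ∑ k, ∑ l, (gmet Φ x)⁻¹ i k * (gmet Φ x)⁻¹ l j * pd i (fun y => gmet Φ y k l) x =
        ∑ k, ∑ l, (gmet Φ x)⁻¹ i k * (gmet Φ x)⁻¹ j l * pd i (fun y => gmet Φ y l k) x := by
      simp only [(gmet_isSymm Φ _).apply, (gmet_isSymm Φ x).inv.apply]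
    rw [← hvol, ← hinv]
    ring
  have hcomm : ∑ i, ∑ k, ∑ l,
        (gmet Φ x)⁻¹ k l * (gmet Φ x)⁻¹ j i * pd i (fun y => gmet Φ y k l) x =
      ∑ k, ∑ l, ∑ i, (gmet Φ x)⁻¹ k l * (gmet Φ x)⁻¹ j i * pd i (fun y => gmet Φ y k l) x := by
    rw [Finset.sum_comm]
    exact Finset.sum_congr rfl fun k _ => Finset.sum_comm
  rw [sum_gmet_inv_mul_christoffel, ← hcomm]
  simp only [hterm, ← Finset.mul_sum, Finset.sum_sub_distrib]
  ring

theorem lapl_eq_sum_hess (hΦ : ContDiffAt ℝ 2 Φ x) (hg : (gmet Φ x).PosDef)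
    (hu : ContDiffAt ℝ 2 u x) :
    lapl Φ u x = ∑ i, ∑ j, (gmet Φ x)⁻¹ i j * hess Φ u x i j := by
  have hterm (i j : Fin n) : pd i (fun y => vElem Φ y * (gmet Φ y)⁻¹ i j * pd j u y) x =
      vElem Φ x * ((gmet Φ x)⁻¹ i j * pd i (pd j u) x) +
        pd i (fun y => vElem Φ y * (gmet Φ y)⁻¹ i j) x * pd j u x := by
    rw [pd_mul ((hasFDerivAt_vElem hΦ hg).differentiableAt.fun_mul
      (hasFDerivAt_gmet_inv hΦ hg i j).differentiableAt) (differentiableAt_pd hu j), mul_assoc]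
  have hdiv : ∑ i, ∑ j, pd i (fun y => vElem Φ y * (gmet Φ y)⁻¹ i j) x * pd j u x =
      -(vElem Φ x * ∑ i, ∑ j, (gmet Φ x)⁻¹ i j * ∑ k, christoffel Φ k i j x * pd k u x) := by
    rw [Finset.sum_comm]
    simp only [← Finset.sum_mul, sum_pd_vElem_mul_gmet_inv hΦ hg, neg_mul,
      Finset.sum_neg_distrib, mul_assoc, ← Finset.mul_sum]
    simp only [Finset.sum_mul, Finset.mul_sum, mul_assoc]
    rw [Finset.sum_comm]
    exact congrArg Neg.neg (Finset.sum_congr rfl fun i _ => Finset.sum_comm)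
  have hv := (vElem_pos hg).ne'
  simp only [lapl, hterm, Finset.sum_add_distrib, ← Finset.mul_sum, hdiv]
  rw [← sub_eq_add_neg, ← mul_sub, inv_mul_cancel_left₀ hv]
  simp only [hess, mul_sub, Finset.sum_sub_distrib]

theorem lapl_eq_trace (hΦ : ContDiffAt ℝ 2 Φ x) (hg : (gmet Φ x).PosDef)
    (hu : ContDiffAt ℝ 2 u x) :
    lapl Φ u x = ((gmet Φ x)⁻¹ * Matrix.of (hess Φ u x)).trace := by
  rw [lapl_eq_sum_hess hΦ hg hu, ← sum_sum_mul_eq_trace_mul (gmet_isSymm Φ x).inv]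
  rfl

theorem christoffel_eq (hΦ : ContDiffAt ℝ 2 Φ x) (k i j : Fin n) :
    christoffel Φ k i j x = ∑ l, (gmet Φ x)⁻¹ k l * ⟪pd i (pd j Φ) x, pd l Φ x⟫ := by
  have hterm (l : Fin n) : pd i (fun y => gmet Φ y l j) x + pd j (fun y => gmet Φ y l i) x
      - pd l (fun y => gmet Φ y i j) x = 2 * ⟪pd i (pd j Φ) x, pd l Φ x⟫ := by
    rw [pd_gmet hΦ, pd_gmet hΦ, pd_gmet hΦ, pd_comm hΦ j i, pd_comm hΦ i l, pd_comm hΦ j l,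
      real_inner_comm (pd i (pd j Φ) x), real_inner_comm (pd j Φ x) (pd l (pd i Φ) x),
      real_inner_comm (pd i Φ x) (pd l (pd j Φ) x)]
    ring
  simp only [christoffel, hterm, Finset.mul_sum]
  exact Finset.sum_congr rfl fun l _ => by ring

/-- The coordinates `∇ʲu = Σ g^{ij} ∂_i u` of the tangential gradient. -/
def gradCoord (Φ : En n → En (n + 1)) (u : En n → ℝ) (x : En n) : Fin n → ℝ :=
  (gmet Φ x)⁻¹ *ᵥ fun i => pd i u x

/-- The value `∇²u(∇u, ∇u)` of the Hessian on the gradient. -/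
def hessGrad (Φ : En n → En (n + 1)) (u : En n → ℝ) (x : En n) : ℝ :=
  gradCoord Φ u x ⬝ᵥ Matrix.of (hess Φ u x) *ᵥ gradCoord Φ u x

theorem gradSq_eq_dotProduct (Φ : En n → En (n + 1)) (u : En n → ℝ) (x : En n) :
    gradSq Φ u x = (fun i => pd i u x) ⬝ᵥ gradCoord Φ u x := by
  rw [gradSq, Finset.sum_comm]
  simp only [gradCoord, dotProduct, Matrix.mulVec, Finset.mul_sum]
  exact Finset.sum_congr rfl fun j _ => Finset.sum_congr rfl fun i _ => by
    rw [(gmet_isSymm Φ x).inv.apply]; ring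

theorem gradSq_nonneg (hg : (gmet Φ x).PosDef) (u : En n → ℝ) : 0 ≤ gradSq Φ u x := by
  rw [gradSq_eq_dotProduct]
  exact hg.inv.posSemidef.dotProduct_mulVec_nonneg _

theorem gradV_eq_sum (Φ : En n → En (n + 1)) (u : En n → ℝ) (x : En n) :
    gradV Φ u x = ∑ j, gradCoord Φ u x j • pd j Φ x := by
  rw [gradV, Finset.sum_comm]
  simp only [gradCoord, Matrix.mulVec, dotProduct, Finset.sum_smul, (gmet_isSymm Φ x).inv.apply]

theorem inner_gradV (Φ : En n → En (n + 1)) (u : En n → ℝ) (x : En n) (w : En (n + 1)) :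
    ⟪w, gradV Φ u x⟫ = ∑ j, gradCoord Φ u x j * ⟪w, pd j Φ x⟫ := by
  simp [gradV_eq_sum, inner_sum, inner_smul_right]

theorem inner_pd_gradV (hg : (gmet Φ x).PosDef) (u : En n → ℝ) (i : Fin n) :
    ⟪pd i Φ x, gradV Φ u x⟫ = pd i u x := by
  have hmul : gmet Φ x *ᵥ gradCoord Φ u x = fun i => pd i u x := by
    rw [gradCoord, Matrix.mulVec_mulVec,
      Matrix.mul_nonsing_inv _ ((Matrix.isUnit_iff_isUnit_det _).1 hg.isUnit), Matrix.one_mulVec]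
  rw [inner_gradV, ← congrFun hmul i, Matrix.mulVec, dotProduct]
  exact Finset.sum_congr rfl fun j _ => mul_comm _ _

theorem inner_gradV_self (hg : (gmet Φ x).PosDef) (u : En n → ℝ) :
    ⟪gradV Φ u x, gradV Φ u x⟫ = gradSq Φ u x := by
  rw [inner_gradV, gradSq_eq_dotProduct, dotProduct]
  exact Finset.sum_congr rfl fun j _ => by
    rw [real_inner_comm, inner_pd_gradV hg, mul_comm]

theorem hess_eq (hΦ : ContDiffAt ℝ 2 Φ x) (u : En n → ℝ) (i j : Fin n) :
    hess Φ u x i j = pd i (pd j u) x - ⟪pd i (pd j Φ) x, gradV Φ u x⟫ := by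
  have hΓ : ∑ k, christoffel Φ k i j x * pd k u x = ⟪pd i (pd j Φ) x, gradV Φ u x⟫ := by
    simp only [christoffel_eq hΦ, inner_gradV, gradCoord, Matrix.mulVec, dotProduct,
      Finset.sum_mul]
    rw [Finset.sum_comm]
    exact Finset.sum_congr rfl fun l _ => Finset.sum_congr rfl fun k _ => by
      rw [(gmet_isSymm Φ x).inv.apply]; ring
  rw [hess, hΓ]

end InducedMetric

theorem eq_of_forall_inner_eq {ι V : Type*} [Fintype ι] [NormedAddCommGroup V]
    [InnerProductSpace ℝ V] {p w₁ w₂ : V} {e : ι → V} (he : LinearIndependent ℝ e)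
    (hp : ∀ i, ⟪p, e i⟫ = 0) (hp0 : p ≠ 0) (hcard : Fintype.card ι + 1 = Module.finrank ℝ V)
    (hwp : ⟪p, w₁⟫ = ⟪p, w₂⟫) (hwe : ∀ i, ⟪e i, w₁⟫ = ⟪e i, w₂⟫) : w₁ = w₂ := by
  have hspan : Submodule.span ℝ (range e) ≤ (Submodule.span ℝ {p})ᗮ :=
    Submodule.span_le.2 <| range_subset_iff.2 fun i =>
      Submodule.mem_orthogonal_singleton_iff_inner_right.2 (hp i)
  have hp_notMem : p ∉ Submodule.span ℝ (range e) := fun hmem => hp0 <| inner_self_eq_zero.1 <|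
    Submodule.mem_orthogonal_singleton_iff_inner_right.1 (hspan hmem)
  let b := basisOfLinearIndependentOfCardEqFinrank
    (linearIndependent_option'.2 ⟨he, hp_notMem⟩) (by rw [Fintype.card_option, hcard])
  refine InnerProductSpace.ext_inner_left_basis b ?_
  rintro (_ | i) <;> simp [b, hwp, hwe]

section SphereParametrization

variable {n : ℕ} {Φ : En n → En (n + 1)} {x : En n}

/-- `Φ` is a parametrization of the unit sphere near `x`: of class `C²` at `x`, immersive at `x`,
and of unit norm near `x`. -/
structure IsSphereParamAt (Φ : En n → En (n + 1)) (x : En n) : Prop where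
  contDiffAt : ContDiffAt ℝ 2 Φ x
  norm_eq_one : ∀ᶠ y in 𝓝 x, ‖Φ y‖ = 1
  posDef : (gmet Φ x).PosDef

namespace IsSphereParamAt

theorem eventually_inner_self (hΦ : IsSphereParamAt Φ x) : ∀ᶠ y in 𝓝 x, ⟪Φ y, Φ y⟫ = 1 :=
  hΦ.norm_eq_one.mono fun y hy => by rw [real_inner_self_eq_norm_sq, hy, one_pow]

theorem eventually_inner_pd (hΦ : IsSphereParamAt Φ x) (i : Fin n) :
    ∀ᶠ y in 𝓝 x, ⟪Φ y, pd i Φ y⟫ = 0 := by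
  filter_upwards [hΦ.contDiffAt.eventually (by simp), hΦ.eventually_inner_self.eventually_nhds]
    with y hy hy1
  have hd := hy.differentiableAt two_ne_zero
  have h := inner_pd_eq_neg_of_inner_eventuallyEq_const hd hd hy1 i
  rw [real_inner_comm (Φ y)] at h
  linarith

theorem inner_self (hΦ : IsSphereParamAt Φ x) : ⟪Φ x, Φ x⟫ = 1 :=
  hΦ.eventually_inner_self.self_of_nhds

theorem inner_pd (hΦ : IsSphereParamAt Φ x) (i : Fin n) : ⟪Φ x, pd i Φ x⟫ = 0 :=
  (hΦ.eventually_inner_pd i).self_of_nhds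

theorem inner_pd_pd (hΦ : IsSphereParamAt Φ x) (i j : Fin n) :
    ⟪Φ x, pd i (pd j Φ) x⟫ = -gmet Φ x i j :=
  inner_pd_eq_neg_of_inner_eventuallyEq_const (hΦ.contDiffAt.differentiableAt two_ne_zero)
    (differentiableAt_pd hΦ.contDiffAt j) (hΦ.eventually_inner_pd j) i

theorem inner_gradV (hΦ : IsSphereParamAt Φ x) (u : En n → ℝ) : ⟪Φ x, gradV Φ u x⟫ = 0 := by
  simp [_root_.inner_gradV, hΦ.inner_pd]

theorem eq_of_inner_eq (hΦ : IsSphereParamAt Φ x) {w₁ w₂ : En (n + 1)}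
    (hn : ⟪Φ x, w₁⟫ = ⟪Φ x, w₂⟫) (ht : ∀ i, ⟪pd i Φ x, w₁⟫ = ⟪pd i Φ x, w₂⟫) : w₁ = w₂ :=
  eq_of_forall_inner_eq (Matrix.linearIndependent_of_posDef_gram hΦ.posDef) hΦ.inner_pd
    (fun h => by simpa [h] using hΦ.inner_self) (by simp) hn ht

end IsSphereParamAt

end SphereParametrization

section RadialGraph

variable {n : ℕ} {Φ : En n → En (n + 1)} {ρ : En n → ℝ} {x : En n}

/-- The radial graph of the function `ρ` over `Φ`. -/
def radialGraph (Φ : En n → En (n + 1)) (ρ : En n → ℝ) (y : En n) : En (n + 1) :=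
  ρ y • Φ y

theorem contDiffAt_radialGraph (hΦ : ContDiffAt ℝ 2 Φ x) (hρ : ContDiffAt ℝ 2 ρ x) :
    ContDiffAt ℝ 2 (radialGraph Φ ρ) x :=
  hρ.smul hΦ

theorem pd_radialGraph (hΦ : DifferentiableAt ℝ Φ x) (hρ : DifferentiableAt ℝ ρ x) (i : Fin n) :
    pd i (radialGraph Φ ρ) x = ρ x • pd i Φ x + pd i ρ x • Φ x :=
  pd_smul hρ hΦ i

theorem pd_pd_radialGraph (hΦ : ContDiffAt ℝ 2 Φ x) (hρ : ContDiffAt ℝ 2 ρ x) (i j : Fin n) :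
    pd i (pd j (radialGraph Φ ρ)) x =
      ρ x • pd i (pd j Φ) x + pd i ρ x • pd j Φ x +
        (pd j ρ x • pd i Φ x + pd i (pd j ρ) x • Φ x) := by
  have hΦd := hΦ.differentiableAt two_ne_zero
  have hρd := hρ.differentiableAt two_ne_zero
  have hpd : pd j (radialGraph Φ ρ) =ᶠ[𝓝 x] fun y => ρ y • pd j Φ y + pd j ρ y • Φ y := by
    filter_upwards [hΦ.eventually (by simp), hρ.eventually (by simp)] with y hΦy hρy
    exact pd_radialGraph (hΦy.differentiableAt two_ne_zero) (hρy.differentiableAt two_ne_zero) j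
  rw [pd_congr hpd, pd_add (hρd.fun_smul (differentiableAt_pd hΦ j))
    ((differentiableAt_pd hρ j).fun_smul hΦd), pd_smul hρd (differentiableAt_pd hΦ j),
    pd_smul (differentiableAt_pd hρ j) hΦd]

theorem gmet_radialGraph (hΦ : IsSphereParamAt Φ x) (hρ : DifferentiableAt ℝ ρ x) :
    gmet (radialGraph Φ ρ) x =
      ρ x ^ 2 • gmet Φ x + Matrix.vecMulVec (fun i => pd i ρ x) (fun i => pd i ρ x) := by
  have hinner (i : Fin n) : ⟪pd i Φ x, Φ x⟫ = 0 := by rw [real_inner_comm, hΦ.inner_pd]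
  ext i j
  simp only [gmet, Matrix.of_apply, Matrix.add_apply, Matrix.smul_apply, Matrix.vecMulVec_apply,
    pd_radialGraph (hΦ.contDiffAt.differentiableAt two_ne_zero) hρ, inner_add_left,
    inner_add_right, real_inner_smul_left, real_inner_smul_right, hinner, hΦ.inner_pd,
    hΦ.inner_self, smul_eq_mul]
  ring

theorem posDef_gmet_radialGraph (hΦ : IsSphereParamAt Φ x) (hρ : DifferentiableAt ℝ ρ x)
    (hρ0 : 0 < ρ x) : (gmet (radialGraph Φ ρ) x).PosDef := by
  rw [gmet_radialGraph hΦ hρ]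
  exact (hΦ.posDef.smul (by positivity)).add_posSemidef (Matrix.posSemidef_vecMulVec_self_star _)

theorem gmet_radialGraph_inv (hΦ : IsSphereParamAt Φ x) (hρ : DifferentiableAt ℝ ρ x)
    (hρ0 : 0 < ρ x) :
    (gmet (radialGraph Φ ρ) x)⁻¹ = (ρ x ^ 2)⁻¹ • ((gmet Φ x)⁻¹ -
      (ρ x ^ 2 + gradSq Φ ρ x)⁻¹ • Matrix.vecMulVec (gradCoord Φ ρ x) (gradCoord Φ ρ x)) := by
  have hG := gradSq_nonneg hΦ.posDef ρ
  have hinv : (ρ x ^ 2 • gmet Φ x)⁻¹ = (ρ x ^ 2)⁻¹ • (gmet Φ x)⁻¹ :=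
    Matrix.inv_smul' _ (Units.mk0 (ρ x ^ 2) (by positivity)) hΦ.posDef.det_pos.ne'.isUnit
  have hsymm : (fun i => pd i ρ x) ᵥ* (gmet Φ x)⁻¹ = gradCoord Φ ρ x := by
    rw [gradCoord, ← Matrix.vecMul_transpose, (gmet_isSymm Φ x).inv.eq]
  have hdot : 1 + (fun i => pd i ρ x) ⬝ᵥ (ρ x ^ 2 • gmet Φ x)⁻¹ *ᵥ (fun i => pd i ρ x) =
      (ρ x ^ 2)⁻¹ * (ρ x ^ 2 + gradSq Φ ρ x) := by
    rw [hinv, Matrix.smul_mulVec, dotProduct_smul, ← gradCoord, ← gradSq_eq_dotProduct,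
      smul_eq_mul]
    field_simp
  have hunit : IsUnit (ρ x ^ 2 • gmet Φ x) := (hΦ.posDef.smul (by positivity)).isUnit
  rw [gmet_radialGraph hΦ hρ, inv_add_vecMulVec hunit _ _ (by rw [hdot]; positivity), hdot, hinv,
    Matrix.smul_mulVec, Matrix.vecMul_smul, hsymm, ← gradCoord, smul_sub, smul_smul]
  ext i j
  simp only [Matrix.sub_apply, Matrix.smul_apply, Matrix.vecMulVec_apply, Pi.smul_apply,
    smul_eq_mul]
  field_simp

theorem trace_gmet_radialGraph_inv_mul (hΦ : IsSphereParamAt Φ x) (hρ : DifferentiableAt ℝ ρ x)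
    (hρ0 : 0 < ρ x) (B : Matrix (Fin n) (Fin n) ℝ) :
    ((gmet (radialGraph Φ ρ) x)⁻¹ * B).trace = (ρ x ^ 2)⁻¹ * (((gmet Φ x)⁻¹ * B).trace -
      (gradCoord Φ ρ x ⬝ᵥ B *ᵥ gradCoord Φ ρ x) / (ρ x ^ 2 + gradSq Φ ρ x)) := by
  rw [gmet_radialGraph_inv hΦ hρ hρ0, Matrix.smul_mul, Matrix.trace_smul, Matrix.sub_mul,
    Matrix.trace_sub, Matrix.smul_mul, Matrix.trace_smul, Matrix.vecMulVec_mul,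
    Matrix.trace_vecMulVec, dotProduct_comm, ← Matrix.dotProduct_mulVec]
  simp only [smul_eq_mul, div_eq_inv_mul]

/-- `ν` is a unit normal field along `Y` near `x`, on the same side as `Φ`. The normalization
`‖ν‖ = 1` and the side are only imposed at `x` itself. -/
structure IsOutwardUnitNormalAt (Φ Y ν : En n → En (n + 1)) (x : En n) : Prop where
  differentiableAt : DifferentiableAt ℝ ν x
  norm_eq_one : ‖ν x‖ = 1
  inner_pd : ∀ i, ∀ᶠ y in 𝓝 x, ⟪ν y, pd i Y y⟫ = 0
  inner_pos : 0 < ⟪Φ x, ν x⟫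

/-- The mean curvature of a radial graph over the unit `n`-sphere at a point where the radius is
`r`, its squared gradient norm `G`, its Hessian on the gradient `K` and its Laplacian `L`. -/
def radialMeanCurvature (n : ℕ) (r G K L : ℝ) : ℝ :=
  1 / n * ((√(r ^ 2 + G))⁻¹ * (n - (L - (r * G + K) / (r ^ 2 + G)) / r))

namespace IsOutwardUnitNormalAt

variable {Y ν : En n → En (n + 1)}

theorem sff_apply (hν : IsOutwardUnitNormalAt Φ Y ν x) (hY : ContDiffAt ℝ 2 Y x) (i j : Fin n) :
    sff Y ν x i j = -⟪ν x, pd i (pd j Y) x⟫ := by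
  rw [pd_comm hY, inner_pd_eq_neg_of_inner_eventuallyEq_const hν.differentiableAt
    (differentiableAt_pd hY i) (hν.inner_pd i), neg_neg, real_inner_comm]
  rfl

theorem eq_smul_sub_gradV (hν : IsOutwardUnitNormalAt Φ (radialGraph Φ ρ) ν x)
    (hΦ : IsSphereParamAt Φ x) (hρ : DifferentiableAt ℝ ρ x) (hρ0 : 0 < ρ x) :
    ν x = ⟪Φ x, ν x⟫ • (Φ x - (ρ x)⁻¹ • gradV Φ ρ x) := by
  refine hΦ.eq_of_inner_eq ?_ fun i => ?_
  · simp only [real_inner_smul_right, inner_sub_right, hΦ.inner_self, hΦ.inner_gradV]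
    ring
  · have hnormal := (hν.inner_pd i).self_of_nhds
    rw [pd_radialGraph (hΦ.contDiffAt.differentiableAt two_ne_zero) hρ, inner_add_right,
      real_inner_smul_right, real_inner_smul_right, real_inner_comm, real_inner_comm (Φ x)]
      at hnormal
    simp only [real_inner_smul_right, inner_sub_right, inner_pd_gradV hΦ.posDef,
      real_inner_comm (Φ x) (pd i Φ x), hΦ.inner_pd]
    field_simp
    linarith

theorem inner_eq_div_sqrt (hν : IsOutwardUnitNormalAt Φ (radialGraph Φ ρ) ν x)
    (hΦ : IsSphereParamAt Φ x) (hρ : DifferentiableAt ℝ ρ x) (hρ0 : 0 < ρ x) :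
    ⟪Φ x, ν x⟫ = ρ x / √(ρ x ^ 2 + gradSq Φ ρ x) := by
  have hG := gradSq_nonneg hΦ.posDef ρ
  have hnorm : ⟪ν x, ν x⟫ = 1 := by rw [real_inner_self_eq_norm_sq, hν.norm_eq_one, one_pow]
  rw [hν.eq_smul_sub_gradV hΦ hρ hρ0] at hnorm
  simp only [real_inner_smul_left, real_inner_smul_right, inner_sub_left, inner_sub_right,
    hΦ.inner_self, hΦ.inner_gradV, real_inner_comm (Φ x) (gradV Φ ρ x),
    inner_gradV_self hΦ.posDef] at hnorm
  have hW : √(ρ x ^ 2 + gradSq Φ ρ x) ^ 2 = ρ x ^ 2 + gradSq Φ ρ x := Real.sq_sqrt (by positivity)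
  rw [eq_div_iff (by positivity), ← sq_eq_sq₀ (mul_nonneg hν.inner_pos.le (sqrt_nonneg _)) hρ0.le,
    mul_pow, hW]
  field_simp at hnorm
  linarith

theorem sff_radialGraph (hν : IsOutwardUnitNormalAt Φ (radialGraph Φ ρ) ν x)
    (hΦ : IsSphereParamAt Φ x) (hρ : ContDiffAt ℝ 2 ρ x) (hρ0 : 0 < ρ x) :
    sff (radialGraph Φ ρ) ν x = ⟪Φ x, ν x⟫ • ((ρ x)⁻¹ • gmet (radialGraph Φ ρ) x +
      (ρ x)⁻¹ • Matrix.vecMulVec (fun i => pd i ρ x) (fun i => pd i ρ x) -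
      Matrix.of (hess Φ ρ x)) := by
  have hρd := hρ.differentiableAt two_ne_zero
  have hinner (w : En (n + 1)) :
      ⟪ν x, w⟫ = ⟪Φ x, ν x⟫ * (⟪Φ x, w⟫ - (ρ x)⁻¹ * ⟪w, gradV Φ ρ x⟫) := by
    conv_lhs => rw [hν.eq_smul_sub_gradV hΦ hρd hρ0]
    rw [real_inner_smul_left, inner_sub_left, real_inner_smul_left, real_inner_comm (gradV Φ ρ x)]
  ext i j
  rw [hν.sff_apply (contDiffAt_radialGraph hΦ.contDiffAt hρ),
    pd_pd_radialGraph hΦ.contDiffAt hρ, gmet_radialGraph hΦ hρd]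
  simp only [hinner, inner_add_right, inner_add_left, real_inner_smul_right, real_inner_smul_left,
    hΦ.inner_self, hΦ.inner_pd, hΦ.inner_pd_pd, hΦ.inner_gradV, inner_pd_gradV hΦ.posDef,
    hess_eq hΦ.contDiffAt, Matrix.smul_apply, Matrix.add_apply, Matrix.sub_apply,
    Matrix.vecMulVec_apply, Matrix.of_apply, smul_eq_mul]
  field_simp
  ring

theorem Hmean_radialGraph (hν : IsOutwardUnitNormalAt Φ (radialGraph Φ ρ) ν x)
    (hΦ : IsSphereParamAt Φ x) (hρ : ContDiffAt ℝ 2 ρ x) (hρ0 : 0 < ρ x) :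
    Hmean (radialGraph Φ ρ) ν x =
      radialMeanCurvature n (ρ x) (gradSq Φ ρ x) (hessGrad Φ ρ x) (lapl Φ ρ x) := by
  have hρd := hρ.differentiableAt two_ne_zero
  have hG := gradSq_nonneg hΦ.posDef ρ
  have hself : ((gmet (radialGraph Φ ρ) x)⁻¹ * gmet (radialGraph Φ ρ) x).trace = n := by
    rw [Matrix.nonsing_inv_mul _
      (posDef_gmet_radialGraph hΦ hρd hρ0).det_pos.ne'.isUnit, Matrix.trace_one, Fintype.card_fin]
  have hgrad : ((gmet Φ x)⁻¹ *
      Matrix.vecMulVec (fun i => pd i ρ x) (fun i => pd i ρ x)).trace = gradSq Φ ρ x := by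
    rw [Matrix.mul_vecMulVec, Matrix.trace_vecMulVec, dotProduct_comm, gradSq_eq_dotProduct,
      gradCoord]
  have hgrad_sq : gradCoord Φ ρ x ⬝ᵥ
      Matrix.vecMulVec (fun i => pd i ρ x) (fun i => pd i ρ x) *ᵥ gradCoord Φ ρ x =
        gradSq Φ ρ x ^ 2 := by
    rw [Matrix.vecMulVec_mulVec, op_smul_eq_smul, dotProduct_smul, ← gradSq_eq_dotProduct,
      dotProduct_comm, ← gradSq_eq_dotProduct, smul_eq_mul, sq]
  rw [Hmean, sum_sum_mul_eq_trace_mul (gmet_isSymm _ x).inv, hν.sff_radialGraph hΦ hρ hρ0,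
    Matrix.mul_smul, Matrix.mul_sub, Matrix.mul_add, Matrix.mul_smul, Matrix.mul_smul]
  simp only [Matrix.trace_smul, Matrix.trace_sub, Matrix.trace_add, hself,
    trace_gmet_radialGraph_inv_mul hΦ hρd hρ0, hgrad, hgrad_sq,
    ← lapl_eq_trace hΦ.contDiffAt hΦ.posDef hρ, hessGrad, smul_eq_mul,
    hν.inner_eq_div_sqrt hΦ hρd hρ0, radialMeanCurvature]
  field_simp
  ring

end IsOutwardUnitNormalAt

end RadialGraph

section AffineScaling

variable {n : ℕ} {Φ : En n → En (n + 1)} {f : En n → ℝ} {x : En n} {b t : ℝ}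

theorem gradCoord_const_add_mul :
    gradCoord Φ (fun y => b + t * f y) x = t • gradCoord Φ f x := by
  simp only [gradCoord, pd_const_add_mul, ← Matrix.mulVec_smul]
  rfl

theorem gradSq_const_add_mul : gradSq Φ (fun y => b + t * f y) x = t ^ 2 * gradSq Φ f x := by
  simp only [gradSq, pd_const_add_mul, Finset.mul_sum]
  exact Finset.sum_congr rfl fun i _ => Finset.sum_congr rfl fun j _ => by ring

theorem lapl_const_add_mul : lapl Φ (fun y => b + t * f y) x = t * lapl Φ f x := by
  simp only [lapl, pd_const_add_mul, mul_left_comm _ t, pd_const_mul, ← Finset.mul_sum]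

theorem hess_const_add_mul : Matrix.of (hess Φ (fun y => b + t * f y) x) =
    t • Matrix.of (hess Φ f x) := by
  ext i j
  simp only [Matrix.of_apply, Matrix.smul_apply, smul_eq_mul, hess, pd_const_add_mul, pd_const_mul,
    mul_left_comm _ t, ← Finset.mul_sum, mul_sub]

theorem hessGrad_const_add_mul :
    hessGrad Φ (fun y => b + t * f y) x = t ^ 3 * hessGrad Φ f x := by
  simp only [hessGrad, gradCoord_const_add_mul, hess_const_add_mul, smul_dotProduct,
    Matrix.smul_mulVec, Matrix.mulVec_smul, dotProduct_smul, smul_eq_mul]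
  ring

end AffineScaling

section TwoJets

variable {𝕜 : Type*} [NontriviallyNormedField 𝕜] {t : 𝕜}

/-- `h` is twice differentiable at `t` with `h t = a`, `h' t = b` and `h'' t = c`. -/
structure HasTwoJetAt (h : 𝕜 → 𝕜) (a b c t : 𝕜) : Prop where
  value_eq : h t = a
  exists_hasDerivAt : ∃ h' : 𝕜 → 𝕜,
    (∀ᶠ s in 𝓝 t, HasDerivAt h (h' s) s) ∧ h' t = b ∧ HasDerivAt h' c t

namespace HasTwoJetAt

variable {g h : 𝕜 → 𝕜} {a a' b b' c c' : 𝕜}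

theorem deriv_deriv_eq (hh : HasTwoJetAt h a b c t) : deriv (deriv h) t = c := by
  obtain ⟨-, h', hd, -, hd'⟩ := hh
  exact (hd'.congr_of_eventuallyEq (hd.mono fun s hs => hs.deriv)).deriv

theorem of_contDiffAt (hh : ContDiffAt 𝕜 2 h t) :
    HasTwoJetAt h (h t) (deriv h t) (deriv (deriv h) t) t :=
  ⟨rfl, deriv h,
    (hh.eventually (by simp)).mono fun _ hs => (hs.differentiableAt two_ne_zero).hasDerivAt, rfl,
    ((hh.derivWithin one_add_one_eq_two.le).differentiableAt one_ne_zero).hasDerivAt⟩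

theorem continuousAt (hh : HasTwoJetAt h a b c t) : ContinuousAt h t := by
  obtain ⟨-, h', hd, -⟩ := hh
  exact hd.self_of_nhds.continuousAt

protected theorem const (a t : 𝕜) : HasTwoJetAt (fun _ => a) a 0 0 t :=
  ⟨rfl, 0, .of_forall fun s => hasDerivAt_const s a, rfl, hasDerivAt_const t 0⟩

protected theorem id (t : 𝕜) : HasTwoJetAt (fun s => s) t 1 0 t :=
  ⟨rfl, 1, .of_forall hasDerivAt_id, rfl, hasDerivAt_const t 1⟩

protected theorem add (hg : HasTwoJetAt g a b c t) (hh : HasTwoJetAt h a' b' c' t) :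
    HasTwoJetAt (fun s => g s + h s) (a + a') (b + b') (c + c') t := by
  obtain ⟨rfl, g', hgd, rfl, hgd'⟩ := hg
  obtain ⟨rfl, h', hhd, rfl, hhd'⟩ := hh
  exact ⟨rfl, _, (hgd.and hhd).mono fun s hs => hs.1.add hs.2, rfl, hgd'.add hhd'⟩

protected theorem sub (hg : HasTwoJetAt g a b c t) (hh : HasTwoJetAt h a' b' c' t) :
    HasTwoJetAt (fun s => g s - h s) (a - a') (b - b') (c - c') t := by
  obtain ⟨rfl, g', hgd, rfl, hgd'⟩ := hg
  obtain ⟨rfl, h', hhd, rfl, hhd'⟩ := hh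
  exact ⟨rfl, _, (hgd.and hhd).mono fun s hs => hs.1.sub hs.2, rfl, hgd'.sub hhd'⟩

protected theorem mul (hg : HasTwoJetAt g a b c t) (hh : HasTwoJetAt h a' b' c' t) :
    HasTwoJetAt (fun s => g s * h s) (a * a') (b * a' + a * b')
      (c * a' + 2 * (b * b') + a * c') t := by
  obtain ⟨rfl, g', hgd, rfl, hgd'⟩ := hg
  obtain ⟨rfl, h', hhd, rfl, hhd'⟩ := hh
  exact ⟨rfl, _, (hgd.and hhd).mono fun s hs => hs.1.mul hs.2, rfl,
    ((hgd'.mul hhd.self_of_nhds).add (hgd.self_of_nhds.mul hhd')).congr_deriv (by ring)⟩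

protected theorem inv (hh : HasTwoJetAt h a b c t) (ha : a ≠ 0) :
    HasTwoJetAt (fun s => (h s)⁻¹) a⁻¹ (-b / a ^ 2) (2 * b ^ 2 / a ^ 3 - c / a ^ 2) t := by
  obtain ⟨rfl, h', hd, rfl, hd'⟩ := hh
  have hdt := hd.self_of_nhds
  have hne := hdt.continuousAt.eventually_ne ha
  refine ⟨rfl, _, (hd.and hne).mono fun s hs => hs.1.fun_inv hs.2, rfl, ?_⟩
  refine (hd'.neg.div (hdt.pow 2) (pow_ne_zero 2 ha)).congr_deriv ?_
  simp only [Pi.neg_apply, Pi.pow_apply]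
  field_simp
  ring

protected theorem sqrt {h : ℝ → ℝ} {a b c t : ℝ} (hh : HasTwoJetAt h a b c t) (ha : 0 < a) :
    HasTwoJetAt (fun s => √(h s)) (√a) (b / (2 * √a))
      (c / (2 * √a) - b ^ 2 / (4 * (a * √a))) t := by
  obtain ⟨rfl, h', hd, rfl, hd'⟩ := hh
  have hdt := hd.self_of_nhds
  have hne := hdt.continuousAt.eventually_ne ha.ne'
  refine ⟨rfl, _, (hd.and hne).mono fun s hs => hs.1.sqrt hs.2, rfl, ?_⟩
  refine (hd'.div ((hdt.sqrt ha.ne').const_mul 2) (by positivity)).congr_deriv ?_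
  have hs := Real.sq_sqrt ha.le
  field_simp
  rw [hs]
  ring

end HasTwoJetAt

end TwoJets

section SecondVariation

variable {n : ℕ} {Φ : En n → En (n + 1)} {f : En n → ℝ} {φ : ℝ → ℝ} {x : En n}

theorem Xvar_eq_radialGraph (f : En n → ℝ) (φ : ℝ → ℝ) (Φ : En n → En (n + 1)) (t : ℝ) :
    Xvar f φ Φ t = radialGraph Φ fun y => 1 + φ t + t * f y := by
  ext1 y
  rw [Xvar, radialGraph, add_right_comm]

theorem hasTwoJetAt_radialMeanCurvature {r : ℝ → ℝ} {α β : ℝ} (hr : HasTwoJetAt r 1 α β 0)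
    (n : ℕ) (G K L : ℝ) :
    HasTwoJetAt (fun t => radialMeanCurvature n (r t) (t ^ 2 * G) (t ^ 3 * K) (t * L))
      (1 / n * n) (1 / n * -(n * α + L))
      (1 / n * (n * (2 * α ^ 2 - β) + 4 * α * L + (2 - n) * G)) 0 := by
  have ht := HasTwoJetAt.id (0 : ℝ)
  have ht2 : HasTwoJetAt (fun t : ℝ => t ^ 2) 0 0 2 0 := by
    simpa [sq, one_add_one_eq_two] using ht.mul ht
  have ht3 : HasTwoJetAt (fun t : ℝ => t ^ 3) 0 0 0 0 := by
    simpa [pow_succ] using ht2.mul ht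
  have hW : HasTwoJetAt (fun t => r t ^ 2 + t ^ 2 * G) 1 (2 * α)
      (2 * α ^ 2 + 2 * β + 2 * G) 0 := by
    convert (hr.mul hr).add (ht2.mul (.const G 0)) using 1
    · simp only [sq]
    all_goals ring
  have hQ : HasTwoJetAt (fun t => r t * (t ^ 2 * G) + t ^ 3 * K) 0 0 (2 * G) 0 := by
    convert (hr.mul (ht2.mul (.const G 0))).add (ht3.mul (.const K 0)) using 1 <;> ring
  have hbracket : HasTwoJetAt (fun t =>
      n - (t * L - (r t * (t ^ 2 * G) + t ^ 3 * K) / (r t ^ 2 + t ^ 2 * G)) / r t)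
      n (-L) (2 * α * L + 2 * G) 0 := by
    simp only [div_eq_mul_inv]
    convert (HasTwoJetAt.const (n : ℝ) 0).sub (((ht.mul (.const L 0)).sub
      (hQ.mul (hW.inv one_ne_zero))).mul (hr.inv one_ne_zero)) using 1 <;> ring
  have hsqrt : HasTwoJetAt (fun t => (√(r t ^ 2 + t ^ 2 * G))⁻¹) 1 (-α)
      (2 * α ^ 2 - β - G) 0 := by
    convert (hW.sqrt one_pos).inv (by simp) using 1 <;> rw [sqrt_one] <;> ring
  unfold radialMeanCurvature
  convert (HasTwoJetAt.const (1 / n : ℝ) 0).mul (hsqrt.mul hbracket) using 1 <;> ring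

theorem second_variation_mean_curvature_general (hn : n ≠ 0) (hΦ : IsSphereParamAt Φ x)
    (hf : ContDiffAt ℝ 2 f x) (hφ : ContDiffAt ℝ 2 φ 0) (hφ0 : φ 0 = 0)
    {N : ℝ → En n → En (n + 1)}
    (hN : ∀ᶠ t in 𝓝 0, IsOutwardUnitNormalAt Φ (Xvar f φ Φ t) (N t) x) :
    deriv (deriv (fun t => Hmean (Xvar f φ Φ t) (N t) x)) 0
      = ((2 - (n : ℝ)) / n) * gradSq Φ f x + 2 * (f x + deriv φ 0) ^ 2
        - deriv (deriv φ) 0 + (4 / (n : ℝ)) * (f x + deriv φ 0) * lapl Φ f x := by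
  have hr : HasTwoJetAt (fun t => 1 + φ t + t * f x) 1 (f x + deriv φ 0) (deriv (deriv φ) 0) 0 := by
    convert ((HasTwoJetAt.const 1 0).add (.of_contDiffAt hφ)).add
      ((HasTwoJetAt.id 0).mul (.const (f x) 0)) using 1 <;> simp [hφ0, add_comm]
  have hr_pos : ∀ᶠ t in 𝓝 0, 0 < 1 + φ t + t * f x :=
    hr.continuousAt.eventually_const_lt (by simp [hφ0])
  have hH : (fun t => Hmean (Xvar f φ Φ t) (N t) x) =ᶠ[𝓝 0] fun t =>
      radialMeanCurvature n (1 + φ t + t * f x) (t ^ 2 * gradSq Φ f x) (t ^ 3 * hessGrad Φ f x)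
        (t * lapl Φ f x) := by
    filter_upwards [hN, hr_pos] with t hNt hrt
    rw [Xvar_eq_radialGraph] at hNt ⊢
    rw [hNt.Hmean_radialGraph hΦ (contDiffAt_const.add (contDiffAt_const.mul hf)) hrt,
      gradSq_const_add_mul, lapl_const_add_mul, hessGrad_const_add_mul]
  rw [hH.deriv.deriv_eq, (hasTwoJetAt_radialMeanCurvature hr ..).deriv_deriv_eq]
  field_simp
  ring

theorem eventually_isOutwardUnitNormalAt {X N : ℝ → En n → En (n + 1)} {s : Set ℝ} {U : Set (En n)}
    {t₀ : ℝ} (hs : s ∈ 𝓝 t₀) (hU : U ∈ 𝓝 x)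
    (hN : ContDiffOn ℝ 1 (fun p : ℝ × En n => N p.1 p.2) (s ×ˢ U))
    (hunit : ∀ t ∈ s, ‖N t x‖ = 1)
    (horth : ∀ t ∈ s, ∀ y ∈ U, ∀ i, ⟪N t y, pd i (X t) y⟫ = 0) (hpos : 0 < ⟪Φ x, N t₀ x⟫) :
    ∀ᶠ t in 𝓝 t₀, IsOutwardUnitNormalAt Φ (X t) (N t) x := by
  have hdiff (t : ℝ) (ht : s ∈ 𝓝 t) :
      DifferentiableAt ℝ (fun p : ℝ × En n => N p.1 p.2) (t, x) :=
    (hN.contDiffAt (prod_mem_nhds ht hU)).differentiableAt one_ne_zero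
  have hcont : ContinuousAt (fun t => ⟪Φ x, N t x⟫) t₀ :=
    continuousAt_const.inner ((hdiff t₀ hs).continuousAt.comp
      (f := fun t => (t, x)) (continuousAt_id.prodMk continuousAt_const))
  filter_upwards [eventually_mem_nhds_iff.2 hs, hcont.eventually_const_lt hpos] with t ht hpos_t
  exact
    { differentiableAt := (hdiff t ht).comp x
        ((differentiableAt_const t).prodMk differentiableAt_id)
      norm_eq_one := hunit t (mem_of_mem_nhds ht)
      inner_pd := fun i => Filter.mem_of_superset hU fun y hy => horth t (mem_of_mem_nhds ht) y hy i
      inner_pos := hpos_t }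

end SecondVariation

/-- `∂²H/∂t² |_(t=0)
= ((2−n)/n) |∇f|² + 2 (f + φ'(0))² − φ''(0) + (4/n)(f + φ'(0)) Δf`. -/
theorem second_variation_mean_curvature {n : ℕ} (hn : 1 ≤ n) (U : Set (En n)) (hU : IsOpen U)
    (Φ : En n → En (n + 1)) (f : En n → ℝ) (φ : ℝ → ℝ) (ε : ℝ) (hε : 0 < ε)
    (hΦ : ContDiffOn ℝ (⊤ : ℕ∞) Φ U) (hf : ContDiffOn ℝ (⊤ : ℕ∞) f U)
    (hφ : ContDiffOn ℝ (⊤ : ℕ∞) φ (Ioo (-ε) ε)) (hφ0 : φ 0 = 0)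
    (hsph : ∀ x ∈ U, ‖Φ x‖ = 1)
    (himm : ∀ x ∈ U, (gmet Φ x).PosDef)
    (N : ℝ → En n → En (n + 1))
    (hNsm : ContDiffOn ℝ (⊤ : ℕ∞) (fun p : ℝ × En n => N p.1 p.2) (Ioo (-ε) ε ×ˢ U))
    (hNunit : ∀ t ∈ Ioo (-ε) ε, ∀ x ∈ U, ‖N t x‖ = 1)
    (hNorth : ∀ t ∈ Ioo (-ε) ε, ∀ x ∈ U, ∀ i : Fin n, ⟪N t x, pd i (Xvar f φ Φ t) x⟫ = 0)
    (hN0 : ∀ x ∈ U, N 0 x = Φ x) :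
    ∀ x ∈ U,
      deriv (deriv (fun t => Hmean (Xvar f φ Φ t) (N t) x)) 0
        = ((2 - (n : ℝ)) / n) * gradSq Φ f x + 2 * (f x + deriv φ 0) ^ 2
          - deriv (deriv φ) 0 + (4 / (n : ℝ)) * (f x + deriv φ 0) * lapl Φ f x := by
  intro x hx
  have hUx : U ∈ 𝓝 x := hU.mem_nhds hx
  have hI : Ioo (-ε) ε ∈ 𝓝 (0 : ℝ) := Ioo_mem_nhds (neg_lt_zero.2 hε) hε
  have htwo : (2 : WithTop ℕ∞) ≤ (⊤ : ℕ∞) := WithTop.coe_le_coe.2 le_top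
  have hone : (1 : WithTop ℕ∞) ≤ (⊤ : ℕ∞) := WithTop.coe_le_coe.2 le_top
  have hΦx : IsSphereParamAt Φ x :=
    { contDiffAt := (hΦ.contDiffAt hUx).of_le htwo
      norm_eq_one := Filter.mem_of_superset hUx hsph
      posDef := himm x hx }
  have hpos : 0 < ⟪Φ x, N 0 x⟫ := by rw [hN0 x hx, hΦx.inner_self]; exact one_pos
  exact second_variation_mean_curvature_general (Nat.one_le_iff_ne_zero.1 hn) hΦx
    ((hf.contDiffAt hUx).of_le htwo) ((hφ.contDiffAt hI).of_le htwo) hφ0 <|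
    eventually_isOutwardUnitNormalAt hI hUx (hNsm.of_le hone)
      (fun t ht => hNunit t ht x hx) hNorth hpos
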